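/- arXiv:2604.04888 — 4 statements merged into one kernel-verified Lean document; each statement's English description precedes it below -/
import Mathlib

section
/- Fix an integer d ≥ 2 and set r = d mod 2. For every m ∈ {0, …, d−1}, ∑_{j=0}^{d−1} exp(−iπ(j+m)((j+m)+r)/d) · exp(iπ j(j+r)/d) = d · δ_{m,0}. -/
open Complex

noncomputable section

/-- Zero-autocorrelation of the Chu sequence `c(k) = exp(−iπ k(k+r)/d)`, `r = d mod 2`:
`∑_{j<d} c(j+m) conj(c(j)) = d·δ_{m,0}` for `m ∈ {0,…,d−1}`. -/
theorem chu_autocorrelation (d : ℕ) (hd : 2 ≤ d) (m : ℕ) (hm : m < d) :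
    ∑ j ∈ Finset.range d,
        Complex.exp (-(Real.pi * Complex.I * ((j + m : ℕ) : ℂ) *
            (((j + m : ℕ) : ℂ) + ((d % 2 : ℕ) : ℂ)) / d)) *
          Complex.exp (Real.pi * Complex.I * (j : ℂ) * ((j : ℂ) + ((d % 2 : ℕ) : ℂ)) / d)
      = d * (if m = 0 then 1 else 0) := by
  have hd0 : (d : ℂ) ≠ 0 := by
    have : d ≠ 0 := by omega
    exact_mod_cast this
  generalize d % 2 = r
  have hprim := Complex.isPrimitiveRoot_exp d (by omega)
  set w : ℂ := Complex.exp (2 * Real.pi * Complex.I / d) with hw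
  set z : ℂ := (w ^ m)⁻¹ with hz
  have hterm : ∀ j : ℕ, Complex.exp (-(Real.pi * Complex.I * ((j + m : ℕ) : ℂ) *
            (((j + m : ℕ) : ℂ) + (r : ℂ)) / d)) *
          Complex.exp (Real.pi * Complex.I * (j : ℂ) * ((j : ℂ) + (r : ℂ)) / d)
      = Complex.exp (-(Real.pi * Complex.I * m * (m + r) / d)) * z ^ j := by
    intro j
    rw [hz, hw, ← Complex.exp_nat_mul, ← Complex.exp_neg, ← Complex.exp_nat_mul,
      ← Complex.exp_add, ← Complex.exp_add]
    congr 1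
    push_cast
    field_simp
    ring
  rw [Finset.sum_congr rfl (fun j _ => hterm j), ← Finset.mul_sum]
  by_cases h0 : m = 0
  · subst h0
    simp [hz]
  · have hz1 : z ≠ 1 := by
      rw [hz, Ne, inv_eq_one]
      exact hprim.pow_ne_one_of_pos_of_lt h0 hm
    have hzd : z ^ d = 1 := by
      rw [hz, inv_pow, ← pow_mul, mul_comm, pow_mul, hprim.pow_eq_one, one_pow, inv_one]
    rw [geom_sum_eq hz1, hzd]
    simp [h0]
end
end

section
/- Fix an integer d ≥ 2, set r = d mod 2, and define the Chu sequence c(k) = exp(−iπ k(k+r)/d) and the two-dimensional coefficients c_{k,l} = c(k)·c(l). For all m, n ∈ {0, …, d−1}, the 2D periodic autocorrelation satisfies ∑_{k=0}^{d−1} ∑_{l=0}^{d−1} c_{k+m, l+n} · conj(c_{k,l}) = d² · δ_{m,0} δ_{n,0}, where the arguments k+m and l+n are taken as ordinary integers. -/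
open Complex

noncomputable section

/-- The Chu sequence `c(k) = exp(−iπ k(k + (d mod 2))/d)`. -/
def chu (d k : ℕ) : ℂ :=
  Complex.exp (-(Real.pi * Complex.I * (k : ℂ) * ((k : ℂ) + ((d % 2 : ℕ) : ℂ)) / d))

theorem chu_step (d : ℕ) (hd : 2 ≤ d) (m k : ℕ) :
    chu d (k + m) * (starRingEnd ℂ) (chu d k)
      = chu d m * Complex.exp (-(2 * Real.pi * Complex.I * m / d)) ^ k := by
  have h0 : (d : ℂ) ≠ 0 := by
    exact_mod_cast (by omega : d ≠ 0)
  unfold chu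
  rw [← Complex.exp_conj, ← Complex.exp_nat_mul, ← Complex.exp_add, ← Complex.exp_add]
  congr 1
  simp only [map_neg, map_div₀, map_mul, map_add, Complex.conj_I, Complex.conj_ofReal,
    Complex.conj_natCast]
  push_cast
  field_simp
  ring

theorem chu_auto (d : ℕ) (hd : 2 ≤ d) (m : ℕ) (hm : m < d) :
    ∑ k ∈ Finset.range d, chu d (k + m) * (starRingEnd ℂ) (chu d k)
      = (d : ℂ) * (if m = 0 then 1 else 0) := by
  have h0 : (d : ℂ) ≠ 0 := by
    exact_mod_cast (by omega : d ≠ 0)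
  simp only [chu_step d hd, ← Finset.mul_sum]
  by_cases h : m = 0
  · subst h
    simp [chu]
  · rw [if_neg h, mul_zero]
    have hp : IsPrimitiveRoot (Complex.exp (2 * Real.pi * Complex.I / d)) d :=
      Complex.isPrimitiveRoot_exp d (by omega)
    have e : Complex.exp (-(2 * Real.pi * Complex.I * m / d))
        = (Complex.exp (2 * Real.pi * Complex.I / d) ^ m)⁻¹ := by
      rw [← Complex.exp_nat_mul, ← Complex.exp_neg]
      congr 1
      ring
    have hne : Complex.exp (-(2 * Real.pi * Complex.I * m / d)) ≠ 1 := by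
      rw [e]
      intro h1
      exact hp.pow_ne_one_of_pos_of_lt h hm (inv_eq_one.mp h1)
    have hpow : Complex.exp (-(2 * Real.pi * Complex.I * m / d)) ^ d = 1 := by
      rw [e, inv_pow, ← pow_mul, mul_comm m d, pow_mul, hp.pow_eq_one, one_pow, inv_one]
    rw [geom_sum_eq hne, hpow]
    simp

/-- 2D zero-autocorrelation of `c_{k,l} = c(k)c(l)`:
`∑_{k,l<d} c_{k+m,l+n} conj(c_{k,l}) = d² δ_{m,0} δ_{n,0}`. -/
theorem chu2D_autocorrelation (d : ℕ) (hd : 2 ≤ d) (m n : ℕ) (hm : m < d) (hn : n < d) :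
    ∑ k ∈ Finset.range d, ∑ l ∈ Finset.range d,
        (chu d (k + m) * chu d (l + n)) * (starRingEnd ℂ) (chu d k * chu d l)
      = (d : ℂ) ^ 2 * ((if m = 0 then 1 else 0) * (if n = 0 then 1 else 0)) := by
  have key : ∀ k l : ℕ, (chu d (k + m) * chu d (l + n)) * (starRingEnd ℂ) (chu d k * chu d l)
      = (chu d (k + m) * (starRingEnd ℂ) (chu d k))
        * (chu d (l + n) * (starRingEnd ℂ) (chu d l)) := by
    intro k l
    rw [map_mul]
    ring
  simp only [key]
  rw [← Finset.sum_mul_sum, chu_auto d hd m hm, chu_auto d hd n hn]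
  ring
end
end

section
/- Fix an integer d ≥ 2 and set r = d mod 2 and c(k) = exp(−iπ k(k+r)/d). Let P be any unitary complex square matrix (of any finite size) satisfying P^d = I. Then the operator V(P) = (1/√d) ∑_{k=0}^{d−1} c(k) P^k is unitary, i.e. V(P) · V(P)† = I. -/
open Matrix Complex

noncomputable section

lemma chu_add (d k m : ℕ) (hd : d ≠ 0) :
    chu d (k + m) = chu d m * chu d k * ((Complex.exp (2 * Real.pi * Complex.I / d))⁻¹ ^ m) ^ k := by
  have hd' : (d : ℂ) ≠ 0 := by exact_mod_cast hd
  unfold chu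
  rw [← Complex.exp_neg, ← Complex.exp_nat_mul, ← Complex.exp_nat_mul, ← Complex.exp_add,
    ← Complex.exp_add]
  congr 1
  push_cast
  field_simp
  ring

lemma chu_star (d k : ℕ) : chu d k * star (chu d k) = 1 := by
  unfold chu
  rw [Complex.star_def, ← Complex.exp_conj, ← Complex.exp_add]
  rw [Complex.exp_eq_one_iff]
  refine ⟨0, ?_⟩
  simp
  ring

lemma chu_self (d : ℕ) (hd : d ≠ 0) : chu d d = 1 := by
  have hd' : (d : ℂ) ≠ 0 := by exact_mod_cast hd
  have : ∃ q, d + d % 2 = 2 * q := ⟨(d + d % 2) / 2, by omega⟩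
  obtain ⟨q, hq⟩ := this
  have hq' : (d : ℂ) + ((d % 2 : ℕ) : ℂ) = 2 * q := by exact_mod_cast hq
  unfold chu
  rw [hq', Complex.exp_eq_one_iff]
  refine ⟨-q, ?_⟩
  push_cast
  field_simp

lemma root_prim (d : ℕ) (hd : d ≠ 0) :
    IsPrimitiveRoot ((Complex.exp (2 * Real.pi * Complex.I / d))⁻¹) d :=
  (Complex.isPrimitiveRoot_exp d hd).inv

lemma chu_periodic (d k : ℕ) (hd : d ≠ 0) : chu d (k + d) = chu d k := by
  rw [chu_add d k d hd, chu_self d hd, (root_prim d hd).pow_eq_one]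
  simp

lemma sum_shift {M : Type*} [AddCommGroup M] (d : ℕ) (f : ℕ → M) (hf : ∀ k, f (k + d) = f k)
    (k : ℕ) : ∑ j ∈ Finset.range d, f j = ∑ m ∈ Finset.range d, f (k + m) := by
  induction k with
  | zero => simp
  | succ k ih =>
    rw [ih]
    have h1 := Finset.sum_range_succ (fun m => f (k + m)) d
    have h2 := Finset.sum_range_succ' (fun m => f (k + m)) d
    rw [h1, hf, add_zero] at h2
    rw [add_right_cancel h2]
    refine Finset.sum_congr rfl fun m _ => ?_
    congr 1
    ring

lemma chu_corr (d m : ℕ) (hd : d ≠ 0) (hm : m < d) :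
    ∑ k ∈ Finset.range d, star (chu d k) * chu d (k + m) = if m = 0 then (d : ℂ) else 0 := by
  have h : ∀ k, star (chu d k) * chu d (k + m) =
      chu d m * ((Complex.exp (2 * Real.pi * Complex.I / d))⁻¹ ^ m) ^ k := by
    intro k
    rw [chu_add d k m hd]
    linear_combination
      (chu d m * ((Complex.exp (2 * Real.pi * Complex.I / d))⁻¹ ^ m) ^ k) * chu_star d k
  simp_rw [h]
  rw [← Finset.mul_sum]
  split_ifs with h0
  · subst h0
    simp [chu]
  · have hne := (root_prim d hd).pow_ne_one_of_pos_of_lt h0 hm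
    have hg := mul_geom_sum ((Complex.exp (2 * Real.pi * Complex.I / d))⁻¹ ^ m) d
    rw [← pow_mul, mul_comm m d, pow_mul, (root_prim d hd).pow_eq_one, one_pow, sub_self] at hg
    rcases mul_eq_zero.1 hg with h1 | h1
    · exact absurd (sub_eq_zero.1 h1) hne
    · rw [h1, mul_zero]

/-- For any unitary `P` with `P^d = 1`, the operator
`V(P) = (1/√d) ∑_{k<d} c(k) P^k` built from the Chu sequence is unitary. -/
theorem V_unitary {ι : Type*} [Fintype ι] [DecidableEq ι] (d : ℕ) (hd : 2 ≤ d)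
    (P : Matrix ι ι ℂ) (hP : P ∈ Matrix.unitaryGroup ι ℂ) (hPd : P ^ d = 1) :
    (((Real.sqrt d : ℂ))⁻¹ • ∑ k ∈ Finset.range d, chu d k • P ^ k) *
        (((Real.sqrt d : ℂ))⁻¹ • ∑ k ∈ Finset.range d, chu d k • P ^ k)ᴴ
      = 1 := by
  have hd0 : d ≠ 0 := by omega
  have hPP : P * Pᴴ = 1 := Matrix.mem_unitaryGroup_iff.1 hP
  have hPk : ∀ k : ℕ, P ^ k * (P ^ k)ᴴ = 1 := fun k =>
    Matrix.mem_unitaryGroup_iff.1 (pow_mem hP k)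
  have key : (∑ k ∈ Finset.range d, chu d k • P ^ k) *
      (∑ k ∈ Finset.range d, chu d k • P ^ k)ᴴ = (d : ℂ) • (1 : Matrix ι ι ℂ) := by
    rw [Matrix.conjTranspose_sum, Finset.mul_sum]
    have step : ∀ k, (∑ j ∈ Finset.range d, chu d j • P ^ j) * (chu d k • P ^ k)ᴴ
        = ∑ m ∈ Finset.range d, (star (chu d k) * chu d (k + m)) • P ^ m := by
      intro k
      rw [sum_shift d (fun j => chu d j • P ^ j)
        (fun j => by simp only [chu_periodic d j hd0, pow_add, hPd, mul_one]) k, Finset.sum_mul]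
      refine Finset.sum_congr rfl fun m _ => ?_
      rw [Matrix.conjTranspose_smul, Matrix.smul_mul, Matrix.mul_smul, smul_smul,
        add_comm k m, pow_add, Matrix.mul_assoc, hPk, Matrix.mul_one, mul_comm]
    simp_rw [step]
    rw [Finset.sum_comm]
    simp_rw [← Finset.sum_smul]
    rw [Finset.sum_congr rfl fun m hm => by rw [chu_corr d m hd0 (Finset.mem_range.1 hm)]]
    rw [Finset.sum_eq_single_of_mem 0 (Finset.mem_range.2 (by omega))]
    · simp
    · intro m _ hm
      simp [hm]
  rw [Matrix.conjTranspose_smul, Matrix.smul_mul, Matrix.mul_smul, key, smul_smul, smul_smul]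
  have hs : (Real.sqrt d : ℂ) * (Real.sqrt d : ℂ) = d := by
    rw [← Complex.ofReal_mul, Real.mul_self_sqrt (Nat.cast_nonneg d)]
    simp
  have hdc : (d : ℂ) ≠ 0 := by exact_mod_cast hd0
  have hsn : (Real.sqrt d : ℂ) ≠ 0 := by
    intro h
    rw [h, zero_mul] at hs
    exact hdc hs.symm
  have hst : star ((Real.sqrt d : ℂ)⁻¹) = (Real.sqrt d : ℂ)⁻¹ := by
    rw [Complex.star_def, map_inv₀, Complex.conj_ofReal]
  rw [hst, ← hs]
  have : (Real.sqrt d : ℂ)⁻¹ * ((Real.sqrt d : ℂ)⁻¹ * ((Real.sqrt d : ℂ) * (Real.sqrt d : ℂ))) = 1 := by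
    field_simp
  simp only [mul_assoc, this, one_smul]
end
end

section
/- For d = 2 and every integer n ≥ 1, the encryption operator satisfies the identity (1/2) ∑_{k,l=0}^{1} c_{k,l} (X₂^k Z₂^l)^{⊗(n+1)} = (1/2) ( I₂^{⊗(n+1)} + (−i) Z₂^{⊗(n+1)} + (−i) X₂^{⊗(n+1)} + (−1)(−i)^{n+1} Y₂^{⊗(n+1)} ), where c_{0,0} = 1, c_{0,1} = c_{1,0} = −i, c_{1,1} = −1 are the d = 2 Chu coefficients c_{k,l} = exp(−iπk²/2)·exp(−iπl²/2), and Y₂ = i·X₂Z₂ is the Pauli Y matrix. -/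
open Matrix Complex

noncomputable section

/-- Pauli X on ℂ². -/
def X2 : Matrix (Fin 2) (Fin 2) ℂ := !![0, 1; 1, 0]

/-- Pauli Z on ℂ². -/
def Z2 : Matrix (Fin 2) (Fin 2) ℂ := !![1, 0; 0, -1]

/-- Pauli Y on ℂ², `Y₂ = i·X₂Z₂`. -/
def Y2 : Matrix (Fin 2) (Fin 2) ℂ := !![0, -Complex.I; Complex.I, 0]

/-- The `m`-fold tensor (Kronecker) power of a `d×d` matrix, as a matrix
indexed by `Fin m → Fin d`: entries `(f,g) ↦ ∏ i, M (f i) (g i)`. -/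
def tpow (d m : ℕ) (M : Matrix (Fin d) (Fin d) ℂ) :
    Matrix (Fin m → Fin d) (Fin m → Fin d) ℂ :=
  Matrix.of fun f g => ∏ i, M (f i) (g i)

/-- At `d = 2` the Chu-sequence encryption operator reduces to the Yamaguchi–Kempf
encryption operator:
`(1/2) ∑_{k,l<2} c_{k,l} (X₂^k Z₂^l)^{⊗(n+1)}
  = (1/2)(I^{⊗(n+1)} − i Z₂^{⊗(n+1)} − i X₂^{⊗(n+1)} + (−1)(−i)^{n+1} Y₂^{⊗(n+1)})`,
where `c_{k,l} = exp(−iπk²/2)·exp(−iπl²/2)`. -/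
theorem Uenc_two_dim (n : ℕ) (hn : 1 ≤ n) :
    (2 : ℂ)⁻¹ • (∑ k ∈ Finset.range 2, ∑ l ∈ Finset.range 2,
        (Complex.exp (-(Real.pi * Complex.I * (k : ℂ) ^ 2 / 2)) *
            Complex.exp (-(Real.pi * Complex.I * (l : ℂ) ^ 2 / 2))) •
          tpow 2 (n + 1) (X2 ^ k * Z2 ^ l))
      = (2 : ℂ)⁻¹ • (tpow 2 (n + 1) 1 + (-Complex.I) • tpow 2 (n + 1) Z2 +
          (-Complex.I) • tpow 2 (n + 1) X2 +
          ((-1) * (-Complex.I) ^ (n + 1)) • tpow 2 (n + 1) Y2) := by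
  have hexp : Complex.exp (-(Real.pi * Complex.I / 2)) = -Complex.I := by
    have h : -((Real.pi : ℂ) * Complex.I / 2) = -(Real.pi / 2 * Complex.I) := by ring
    rw [h, Complex.exp_neg, Complex.exp_pi_div_two_mul_I, Complex.inv_I]
  have hXZ : X2 * Z2 = (-Complex.I) • Y2 := by
    ext i j
    fin_cases i <;> fin_cases j <;> simp [X2, Z2, Y2]
  have ht : tpow 2 (n + 1) (X2 * Z2) = (-Complex.I) ^ (n + 1) • tpow 2 (n + 1) Y2 := by
    rw [hXZ]
    ext f g
    simp only [tpow, Matrix.of_apply, Matrix.smul_apply, smul_eq_mul, Finset.prod_mul_distrib,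
      Finset.prod_const, Finset.card_univ, Fintype.card_fin]
  congr 1
  simp only [Finset.sum_range_succ, Finset.sum_range_zero, zero_add, Nat.cast_zero, Nat.cast_one,
    pow_zero, pow_one, one_pow, mul_one, one_mul, ne_eq, OfNat.ofNat_ne_zero, not_false_eq_true,
    zero_pow, mul_zero, zero_div, neg_zero, Complex.exp_zero, one_smul, hexp, ht, smul_smul]
  have hI : -Complex.I * -Complex.I = -1 := by simp
  rw [hI, ← add_assoc]
end
end
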